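/- Let n ≥ 0. Define v : V_n → ℂ as follows: v(b_n) = 0; if n is even, v((2n,2n)) = −1; for every vertex x = (i₁, x₂) ∈ V_n with x₂ − i₁ = 2i₂+1 odd and x ≠ b_n, set v(x) = Σ_{ℓ=0}^{i₁} (−1)^{i₂+ℓ} binom(i₂−1+ℓ, ℓ) h_n^{1,b}(i₁−ℓ); and for every vertex x = (i₁, x₂) ∈ V_n with x₂ − i₁ = 2i₂ even and x ≠ (2n,2n), set v(x) = (−1)^{i₂} Σ_{ℓ=0}^{i₂} binom(i₂, ℓ) h_n^{0,b}(i₁+ℓ). Then for every x ∈ V_n, Σ_{y ∈ V_n} K_n(x,y)·v(y) equals 1 if x = b_n and equals 0 otherwise. Consequently, if K_n is invertible over ℂ, then K_n⁻¹(x, b_n) = v(x) for all x ∈ V_n. -/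

import Mathlib

open Finset

/-- Membership predicate for the vertex set `V_n` of the TSSCPP graph `G_n`:
`0 ≤ x₁ ≤ 2n`, `x₁ ≤ x₂ ≤ 2n+1`, with `(2n,2n+1)` removed when `n` is odd. -/
def memV (n : ℕ) (x : ℤ × ℤ) : Prop :=
  0 ≤ x.1 ∧ x.1 ≤ 2*(n:ℤ) ∧ x.1 ≤ x.2 ∧ x.2 ≤ 2*(n:ℤ)+1 ∧
    ¬(n % 2 = 1 ∧ x.1 = 2*(n:ℤ) ∧ x.2 = 2*(n:ℤ)+1)

instance memV.decPred (n : ℕ) : DecidablePred (memV n) := fun x => by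
  unfold memV; infer_instance

/-- The vertex set `V_n` as a finite set. -/
noncomputable def Vfin (n : ℕ) : Finset (ℤ × ℤ) :=
  (Finset.Icc (0:ℤ) (2*(n:ℤ)) ×ˢ Finset.Icc (0:ℤ) (2*(n:ℤ)+1)).filter (memV n)

/-- The vertex set `V_n` as a set. -/
def Vset (n : ℕ) : Set (ℤ × ℤ) := {x | memV n x}

/-- The distinguished vertex `b_n = (2n, 2n+1-(n mod 2))`. -/
def bvertex (n : ℕ) : ℤ × ℤ := (2*(n:ℤ), 2*(n:ℤ)+1 - ((n % 2 : ℕ) : ℤ))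

/-- Edge relation (with `x` the "lower-left" endpoint) of the TSSCPP graph `G_n`:
horizontal edges `((x₁,x₂),(x₁+1,x₂))` for `0 ≤ x₁ ≤ 2n−1`, `x₁ ≤ x₂ ≤ 2n+1`, `x₁+x₂` odd;
vertical edges `((x₁,x₂),(x₁,x₂+1))` for `0 ≤ x₁ ≤ 2n` (`2n−1` when `n` odd), `x₁ ≤ x₂ ≤ 2n`;
diagonal edges `((x₁,x₁),(x₁+1,x₁+1))` for `0 ≤ x₁ ≤ 2n−1`. -/
def edgeRel (n : ℕ) (x y : ℤ × ℤ) : Prop :=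
  (y.1 = x.1 + 1 ∧ y.2 = x.2 ∧ 0 ≤ x.1 ∧ x.1 ≤ 2*(n:ℤ) - 1 ∧ x.1 ≤ x.2 ∧
      x.2 ≤ 2*(n:ℤ)+1 ∧ Odd (x.1 + x.2)) ∨
  (y.1 = x.1 ∧ y.2 = x.2 + 1 ∧ 0 ≤ x.1 ∧ x.1 ≤ 2*(n:ℤ) - ((n % 2 : ℕ) : ℤ) ∧
      x.1 ≤ x.2 ∧ x.2 ≤ 2*(n:ℤ)) ∨
  (x.1 = x.2 ∧ y.1 = x.1 + 1 ∧ y.2 = x.2 + 1 ∧ 0 ≤ x.1 ∧ x.1 ≤ 2*(n:ℤ) - 1)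

/-- The TSSCPP graph `G_n` (as a graph on all of `ℤ × ℤ`; all of its edges join
vertices of `V_n`). -/
def Gph (n : ℕ) : SimpleGraph (ℤ × ℤ) where
  Adj x y := edgeRel n x y ∨ edgeRel n y x
  symm := ⟨fun x y h => Or.symm h⟩
  loopless := by
    constructor
    rintro ⟨x1, x2⟩ (h | h) <;>
      rcases h with ⟨h1, h2, -⟩ | ⟨h1, h2, -⟩ | ⟨h0, h1, h2, -⟩ <;> omega

/-- `Zpm n U` = number of perfect matchings of the subgraph of `G_n` induced on `V_n \ U`. -/
noncomputable def Zpm (n : ℕ) (U : Set (ℤ × ℤ)) : ℕ :=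
  Nat.card {M : ((Gph n).induce (Vset n \ U)).Subgraph // M.IsPerfectMatching}

/-- The entry function `k(x,y)` of the Kasteleyn matrix (over `ℂ`). -/
def kfunC (x y : ℤ × ℤ) : ℂ :=
  if ((x.1 + x.2) % 2 = 0 ∧ x.2 = y.2 ∧ x.1 - y.1 = 1) ∨
     ((x.1 + x.2) % 2 = 0 ∧ x.1 = y.1 ∧ (y.2 - x.2 = 1 ∨ x.2 - y.2 = 1)) ∨
     (x.1 = x.2 ∧ y.1 = y.2 ∧ y.1 = x.1 - 1)
  then 1 else 0

/-- The Kasteleyn matrix `K_n` of `G_n` over `ℂ`, rows and columns indexed by `V_n`. -/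
def KmatC (n : ℕ) : Matrix ↥(Vfin n) ↥(Vfin n) ℂ :=
  fun x y => kfunC x.val y.val - kfunC y.val x.val

/-- `p(n,k,ℓ) = (−1)^k (3n−3k+2) C_{n−k} (n+k−2ℓ+1)! (2n−k−ℓ+1)! / ((k−ℓ)! (3n−k+2−2ℓ)!)`. -/
def pnk (n k l : ℕ) : ℚ :=
  (-1)^k * (3*(n:ℚ) - 3*(k:ℚ) + 2) * (catalan (n-k) : ℚ) *
    (Nat.factorial (n+k-2*l+1) : ℚ) * (Nat.factorial (2*n-k-l+1) : ℚ) /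
    ((Nat.factorial (k-l) : ℚ) * (Nat.factorial (3*n-k+2-2*l) : ℚ))

/-- `h_n^{0,b}(i) = −((i+1) mod 2) + Σ_{k=0}^{n} p(n,k,0)·(1/2πi)∮ (1+r)^{n−k}(1−r)^{-1}r^{2k−i} dr`,
over the positively oriented circle of radius `1/2` centred at the origin. -/
noncomputable def h0b (n i : ℕ) : ℂ :=
  -((((i+1) % 2 : ℕ) : ℂ)) + ∑ k ∈ Finset.range (n+1), ((pnk n k 0 : ℚ) : ℂ) *
    (1/(2*(Real.pi : ℂ)*Complex.I)) *
    (∮ r in C(0, 1/2), (1+r)^(n-k) * (1-r)⁻¹ * r^(2*(k:ℤ) - (i:ℤ)))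

/-- `h_n^{1,b}(i) = Σ_{k=0}^{n} p(n,k,0)·(1/2πi)∮ (1+r)^{n−k} r^{2k−i−1} dr`,
over the positively oriented circle of radius `1/2` centred at the origin. -/
noncomputable def h1b (n i : ℕ) : ℂ :=
  ∑ k ∈ Finset.range (n+1), ((pnk n k 0 : ℚ) : ℂ) *
    (1/(2*(Real.pi : ℂ)*Complex.I)) *
    (∮ r in C(0, 1/2), (1+r)^(n-k) * r^(2*(k:ℤ) - (i:ℤ) - 1))

/-- Generalized binomial coefficient `binom(m,ℓ) = m(m−1)⋯(m−ℓ+1)/ℓ!` for integer `m`. -/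
noncomputable def genBinom (m : ℤ) (l : ℕ) : ℂ :=
  (∏ t ∈ Finset.range l, ((m : ℂ) - (t : ℂ))) / (Nat.factorial l : ℂ)

/-- The candidate column `v` of `K_n⁻¹` at `b_n`: `v(b_n) = 0`; `v((2n,2n)) = −1` when `n`
is even; `v(i₁, i₁+2i₂+1) = Σ_{ℓ=0}^{i₁} (−1)^{i₂+ℓ} binom(i₂−1+ℓ,ℓ)·h_n^{1,b}(i₁−ℓ)`;
and `v(i₁, i₁+2i₂) = (−1)^{i₂} Σ_{ℓ=0}^{i₂} binom(i₂,ℓ)·h_n^{0,b}(i₁+ℓ)`. -/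
noncomputable def vfun (n : ℕ) (x : ℤ × ℤ) : ℂ :=
  if x = bvertex n then 0
  else if x = (2*(n:ℤ), 2*(n:ℤ)) then -1
  else if (x.2 - x.1) % 2 = 1 then
    ∑ l ∈ Finset.range (x.1.toNat + 1),
      (-1)^(((x.2 - x.1 - 1)/2).toNat + l) *
        genBinom ((((x.2 - x.1 - 1)/2).toNat : ℤ) - 1 + (l : ℤ)) l *
        h1b n (x.1.toNat - l)
  else
    (-1)^(((x.2 - x.1)/2).toNat) *
      ∑ l ∈ Finset.range (((x.2 - x.1)/2).toNat + 1),
        genBinom ((((x.2 - x.1)/2).toNat : ℤ)) l * h0b n (x.1.toNat + l)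

/-- The reciprocal factorial `1 / z!` on the integers, vanishing at negative arguments. -/
def recipFactorial (z : ℤ) : ℚ := if z < 0 then 0 else 1 / (Nat.factorial z.toNat : ℚ)

lemma recipFactorial_of_neg {z : ℤ} (hz : z < 0) : recipFactorial z = 0 := if_pos hz

lemma recipFactorial_natCast (m : ℕ) : recipFactorial (m : ℤ) = 1 / (Nat.factorial m : ℚ) := by
  simp [recipFactorial]

lemma recipFactorial_sub_one (z : ℤ) : recipFactorial (z - 1) = z * recipFactorial z := by
  rcases lt_trichotomy z 0 with hz | rfl | hz
  · rw [recipFactorial_of_neg hz, recipFactorial_of_neg (by omega), mul_zero]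
  · simp [recipFactorial]
  · obtain ⟨m, rfl⟩ : ∃ m : ℕ, z = (m : ℤ) + 1 := ⟨(z - 1).toNat, by omega⟩
    have h := recipFactorial_natCast (m + 1)
    push_cast at h
    rw [add_sub_cancel_right, h, recipFactorial_natCast, Nat.factorial_succ]
    push_cast
    field_simp

/-- The binomial coefficient through the reciprocal factorial, valid for all `N` and `M`. -/
lemma choose_eq_recipFactorial (N M : ℕ) :
    (N.choose M : ℚ) = N.factorial / M.factorial * recipFactorial ((N : ℤ) - M) := by
  rcases le_or_gt M N with h | h
  · rw [← Nat.cast_sub h, recipFactorial_natCast, Nat.cast_choose ℚ h]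
    field_simp
  · rw [Nat.choose_eq_zero_of_lt h, recipFactorial_of_neg (by omega)]
    simp

lemma catalan_succ_mul (a : ℕ) :
    ((a : ℚ) + 2) * catalan (a + 1) = 2 * (2 * a + 1) * catalan a := by
  have h1 := succ_mul_catalan_eq_centralBinom a
  have h2 := succ_mul_catalan_eq_centralBinom (a + 1)
  have h3 := Nat.succ_mul_centralBinom_succ a
  rw [← h1, ← h2] at h3
  have h4 : (a + 1) * ((a + 2) * catalan (a + 1)) = (a + 1) * (2 * (2 * a + 1) * catalan a) := by
    linear_combination h3
  exact_mod_cast Nat.eq_of_mul_eq_mul_left a.succ_pos h4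

/-- The coefficient `p(n, n - a, 0)`, extended by zero to `a > n`. -/
def revCoeff (n a : ℕ) : ℚ :=
  (-1) ^ (n + a) * (3 * a + 2) * catalan a * (n + a + 1).factorial * (2 * n + 1 - a).factorial *
    recipFactorial ((n : ℤ) - a) / (2 * n + a + 2).factorial

lemma pnk_eq_revCoeff {n k : ℕ} (hk : k ≤ n) : pnk n k 0 = revCoeff n (n - k) := by
  obtain ⟨a, rfl⟩ := Nat.exists_eq_add_of_le hk
  have e1 : k + a - k = a := by omega
  have e2 : ((k + a : ℕ) : ℤ) - (a : ℕ) = (k : ℕ) := by push_cast; ring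
  have e3 : (-1 : ℚ) ^ (k + a + a) = (-1) ^ k := by
    rw [add_assoc, ← two_mul, pow_add, pow_mul]; simp
  have e4 : k + a + k - 2 * 0 + 1 = 2 * (k + a) + 1 - a := by omega
  have e5 : 2 * (k + a) - k - 0 + 1 = k + a + a + 1 := by omega
  have e6 : 3 * (k + a) - k + 2 - 2 * 0 = 2 * (k + a) + a + 2 := by omega
  rw [pnk, revCoeff, e1, e2, e3, e4, e5, e6, recipFactorial_natCast, Nat.sub_zero]
  push_cast
  field_simp
  ring

lemma revCoeff_of_lt {n a : ℕ} (h : n < a) : revCoeff n a = 0 := by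
  simp [revCoeff, recipFactorial_of_neg (show (n : ℤ) - a < 0 by omega)]

lemma revCoeff_zero (n : ℕ) : revCoeff n 0 = (-1) ^ n := by
  have h : ((n : ℤ) - (0 : ℕ)) = (n : ℕ) := by simp
  rw [revCoeff, h, recipFactorial_natCast]
  simp only [Nat.sub_zero, add_zero, catalan_zero, Nat.factorial_succ]
  push_cast
  field_simp
  ring

/-- The reciprocal-factorial kernel `(a + b)! / ((2a - b + 1)! (2b - a)!)`. -/
def kernelCoeff (b a : ℕ) : ℚ :=
  (a + b).factorial * recipFactorial (2 * (a : ℤ) - b + 1) * recipFactorial (2 * (b : ℤ) - a)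

/-- The telescoping certificate for the recurrence in `b` of `∑ a, revCoeff n a * kernelCoeff b a`. -/
def kernelCertificate (n b a : ℕ) : ℚ :=
  -3 * (b + 1) * (-1) ^ (n + a) * (a + 1) * catalan a * (2 * n + 2 - a).factorial *
    (n + a + 1).factorial * recipFactorial ((n : ℤ) - a) / (2 * n + a + 1).factorial *
    (a + b).factorial * recipFactorial (2 * (a : ℤ) - b - 1) *
    recipFactorial (2 * (b : ℤ) + 2 - a)

lemma kernelCertificate_sub {n a : ℕ} (b : ℕ) (ha : a ≤ n) :
    b * (2 * n + 1 - b) * (2 * n + 3 + b) * (revCoeff n a * kernelCoeff b a) +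
      2 * (2 * b + 3) * (n - b) * (n + b + 2) * (revCoeff n a * kernelCoeff (b + 1) a) =
    kernelCertificate n b (a + 1) - kernelCertificate n b a := by
  obtain ⟨c, rfl⟩ := Nat.exists_eq_add_of_le ha
  have hcat := catalan_succ_mul a
  have r1 := recipFactorial_sub_one (2 * (a : ℤ) - b + 1)
  have r2 := recipFactorial_sub_one (2 * (a : ℤ) - b)
  have r3 := recipFactorial_sub_one (2 * (b : ℤ) + 2 - a)
  have r4 := recipFactorial_sub_one (2 * (b : ℤ) + 1 - a)
  have r5 := recipFactorial_sub_one (c : ℤ)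
  rw [show 2 * (a : ℤ) - b + 1 - 1 = 2 * a - b by ring] at r1
  rw [r1] at r2
  rw [show 2 * (b : ℤ) + 2 - a - 1 = 2 * b + 1 - a by ring] at r3
  rw [show 2 * (b : ℤ) + 1 - a - 1 = 2 * b - a by ring, r3] at r4
  simp only [revCoeff, kernelCoeff, kernelCertificate]
  rw [show 2 * (a + c) + 1 - a = a + 2 * c + 1 by omega,
    show 2 * (a + c) + 2 - (a + 1) = a + 2 * c + 1 by omega,
    show 2 * (a + c) + 2 - a = a + 2 * c + 1 + 1 by omega,
    show a + c + (a + 1) + 1 = a + c + a + 1 + 1 by omega,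
    show 2 * (a + c) + (a + 1) + 1 = 2 * (a + c) + a + 1 + 1 by omega,
    show 2 * (a + c) + a + 2 = 2 * (a + c) + a + 1 + 1 by omega,
    show a + (b + 1) = a + b + 1 by omega, show a + 1 + b = a + b + 1 by omega,
    show a + c + (a + 1) = a + c + a + 1 by omega,
    Nat.factorial_succ (a + 2 * c + 1), Nat.factorial_succ (a + c + a + 1),
    Nat.factorial_succ (2 * (a + c) + a + 1), Nat.factorial_succ (a + b)]
  push_cast
  rw [show 2 * ((a : ℤ) + 1) - b - 1 = 2 * a - b + 1 by ring,
    show 2 * (a : ℤ) - (b + 1) + 1 = 2 * a - b by ring,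
    show 2 * ((b : ℤ) + 1) - a = 2 * b + 2 - a by ring,
    show 2 * (b : ℤ) + 2 - (a + 1) = 2 * b + 1 - a by ring,
    show (a : ℤ) + c - (a + 1) = c - 1 by ring, show (a : ℤ) + c - a = c by ring,
    r1, r2, r3, r4, r5]
  have hcat' : (catalan (a + 1) : ℚ) = 2 * (2 * a + 1) * catalan a / (a + 2) := by
    rw [← hcat]; field_simp
  rw [hcat']
  push_cast
  field_simp
  ring

lemma sum_revCoeff_mul_kernelCoeff_rec (n b : ℕ) :
    b * (2 * n + 1 - b) * (2 * n + 3 + b) *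
        (∑ a ∈ range (n + 1), revCoeff n a * kernelCoeff b a) +
      2 * (2 * b + 3) * (n - b) * (n + b + 2) *
        (∑ a ∈ range (n + 1), revCoeff n a * kernelCoeff (b + 1) a) = 0 := by
  rw [mul_sum, mul_sum, ← sum_add_distrib,
    sum_congr rfl fun a ha => kernelCertificate_sub b (Nat.lt_succ_iff.1 (mem_range.1 ha)),
    sum_range_sub]
  simp only [kernelCertificate]
  rw [recipFactorial_of_neg (z := (n : ℤ) - (n + 1 : ℕ)) (by push_cast; omega),
    recipFactorial_of_neg (z := 2 * ((0 : ℕ) : ℤ) - b - 1) (by push_cast; omega)]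
  simp

lemma sum_revCoeff_mul_kernelCoeff {n b : ℕ} (hb : b < n) :
    ∑ a ∈ range (n + 1), revCoeff n a * kernelCoeff (b + 1) a = 0 := by
  have key : (b : ℚ) * ∑ a ∈ range (n + 1), revCoeff n a * kernelCoeff b a = 0 := by
    cases b with
    | zero => simp
    | succ b => rw [sum_revCoeff_mul_kernelCoeff (by omega), mul_zero]
  have h := sum_revCoeff_mul_kernelCoeff_rec n b
  have hpos : (0 : ℚ) < n - b := by
    rw [sub_pos]; exact_mod_cast hb
  have h' : 2 * (2 * (b : ℚ) + 3) * (n - b) * (n + b + 2) *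
      (∑ a ∈ range (n + 1), revCoeff n a * kernelCoeff (b + 1) a) = 0 := by
    linear_combination h - (2 * n + 1 - b) * (2 * n + 3 + b) * key
  exact (mul_eq_zero.1 h').resolve_left (by positivity)

/-- The telescoping certificate for the recurrence in `n` of `∑ a, 2 ^ a * revCoeff n a`. -/
def evalCertificate (n a : ℕ) : ℚ :=
  2 ^ a * (-1) ^ (n + a) * (2 * n + 3) * (a + 1) * catalan a * (2 * n + 2 - a).factorial *
    (n + a + 1).factorial * recipFactorial ((n : ℤ) + 1 - a) / (2 * n + a + 3).factorial

lemma evalCertificate_sub {n a : ℕ} (ha : a ≤ n + 1) :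
    2 ^ a * revCoeff (n + 1) a - 2 ^ a * revCoeff n a =
      evalCertificate n (a + 1) - evalCertificate n a := by
  obtain ⟨c, hc⟩ := Nat.exists_eq_add_of_le ha
  have hcat := catalan_succ_mul a
  have r1 := recipFactorial_sub_one ((n : ℤ) + 1 - a)
  simp only [revCoeff, evalCertificate]
  rw [show 2 * n + 1 - a = n + c by omega,
    show 2 * n + 2 - (a + 1) = n + c by omega,
    show 2 * n + 2 - a = n + c + 1 by omega,
    show 2 * (n + 1) + 1 - a = n + c + 1 + 1 by omega,
    show n + 1 + a + 1 = n + a + 1 + 1 by omega,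
    show n + (a + 1) + 1 = n + a + 1 + 1 by omega,
    show 2 * (n + 1) + a + 2 = 2 * n + a + 2 + 1 + 1 by omega,
    show 2 * n + (a + 1) + 3 = 2 * n + a + 2 + 1 + 1 by omega,
    show 2 * n + a + 3 = 2 * n + a + 2 + 1 by omega,
    show n + 1 + a = n + a + 1 by omega, show n + (a + 1) = n + a + 1 by omega,
    Nat.factorial_succ (n + c + 1), Nat.factorial_succ (n + c),
    Nat.factorial_succ (n + a + 1), Nat.factorial_succ (2 * n + a + 2 + 1),
    Nat.factorial_succ (2 * n + a + 2)]
  push_cast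
  rw [show (n : ℤ) + 1 - (a + 1) = n - a by ring, show (n : ℤ) - a = n + 1 - a - 1 by ring, r1]
  have hcat' : (catalan (a + 1) : ℚ) = 2 * (2 * a + 1) * catalan a / (a + 2) := by
    rw [← hcat]; field_simp
  have hc' : (c : ℚ) = n + 1 - a := by
    rw [eq_sub_iff_add_eq, add_comm]; exact_mod_cast hc.symm
  rw [hcat', hc']
  push_cast
  field_simp
  ring

lemma evalCertificate_zero (n : ℕ) : evalCertificate n 0 = (-1) ^ n := by
  have h : ((n : ℤ) + 1 - (0 : ℕ)) = (n + 1 : ℕ) := by simp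
  rw [evalCertificate, h, recipFactorial_natCast, show 2 * n + 0 + 3 = 2 * n + 2 + 1 by ring,
    Nat.factorial_succ (2 * n + 2)]
  simp only [Nat.sub_zero, add_zero, catalan_zero]
  push_cast
  field_simp
  ring

lemma sum_two_pow_mul_revCoeff_succ (n : ℕ) :
    ∑ a ∈ range (n + 2), 2 ^ a * revCoeff (n + 1) a =
      ∑ a ∈ range (n + 1), 2 ^ a * revCoeff n a - (-1) ^ n := by
  have h : ∑ a ∈ range (n + 2), 2 ^ a * revCoeff n a =
      ∑ a ∈ range (n + 1), 2 ^ a * revCoeff n a := by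
    rw [sum_range_succ _ (n + 1), revCoeff_of_lt (Nat.lt_succ_self n)]
    simp
  have hdiff : ∑ a ∈ range (n + 2), 2 ^ a * revCoeff (n + 1) a -
      ∑ a ∈ range (n + 2), 2 ^ a * revCoeff n a = -(-1) ^ n := by
    rw [← sum_sub_distrib,
      sum_congr rfl fun a ha => evalCertificate_sub (Nat.lt_succ_iff.1 (mem_range.1 ha)),
      sum_range_sub, evalCertificate_zero]
    simp only [evalCertificate]
    rw [recipFactorial_of_neg (z := (n : ℤ) + 1 - (n + 2 : ℕ)) (by push_cast; omega)]
    simp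
  rw [← h]
  linear_combination hdiff

lemma two_mul_sum_two_pow_mul_revCoeff (n : ℕ) :
    2 * ∑ a ∈ range (n + 1), 2 ^ a * revCoeff n a = 1 + (-1) ^ n := by
  induction n with
  | zero => norm_num [revCoeff_zero]
  | succ n ih =>
    rw [sum_two_pow_mul_revCoeff_succ, mul_sub, ih, pow_succ]
    ring

/-- Partial row sums of the Pascal triangle: `∑ s < M, binom(N, s)`. -/
def chooseSum (N M : ℕ) : ℚ := ∑ s ∈ range M, (N.choose s : ℚ)

lemma chooseSum_succ_sub (N M : ℕ) :
    chooseSum (N + 1) M - 2 * chooseSum N (M + 1) = -((N + 1).choose M + N.choose M) := by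
  induction M with
  | zero => norm_num [chooseSum]
  | succ M ih =>
    have e1 : chooseSum (N + 1) (M + 1) = chooseSum (N + 1) M + (N + 1).choose M :=
      sum_range_succ _ _
    have e2 : chooseSum N (M + 1 + 1) = chooseSum N (M + 1) + N.choose (M + 1) :=
      sum_range_succ _ _
    have e3 : ((N + 1).choose (M + 1) : ℚ) = N.choose M + N.choose (M + 1) := by
      exact_mod_cast Nat.choose_succ_succ N M
    rw [e1, e2, e3]
    linear_combination ih

lemma chooseSum_of_lt {N M : ℕ} (h : N < M) : chooseSum N M = 2 ^ N := by
  obtain ⟨d, rfl⟩ := Nat.exists_eq_add_of_lt h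
  rw [chooseSum, show N + d + 1 = (N + 1) + d by ring, sum_range_add,
    sum_eq_zero (s := range d) fun s _ => by
      rw [Nat.choose_eq_zero_of_lt (by omega)]; simp, add_zero]
  exact_mod_cast Nat.sum_range_choose N

lemma chooseSum_kernel (a b : ℕ) :
    chooseSum (a + b + 2) (2 * a - b) - 2 * chooseSum (a + b + 1) (2 * a + 1 - b) =
      -((3 * b + 4) * kernelCoeff (b + 1) a) := by
  rcases lt_or_ge (2 * a) b with h | h
  · rw [show 2 * a - b = 0 by omega, show 2 * a + 1 - b = 0 by omega, kernelCoeff,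
      recipFactorial_of_neg (z := 2 * (a : ℤ) - (b + 1 : ℕ) + 1) (by push_cast; omega)]
    simp [chooseSum]
  · obtain ⟨M, hM⟩ := Nat.exists_eq_add_of_le h
    rw [show 2 * a - b = M by omega, show 2 * a + 1 - b = M + 1 by omega,
      show a + b + 2 = a + b + 1 + 1 by ring, chooseSum_succ_sub, choose_eq_recipFactorial,
      choose_eq_recipFactorial, kernelCoeff]
    have e1 : (2 * (a : ℤ) - (b + 1 : ℕ) + 1) = (M : ℕ) := by push_cast; omega
    have e2 : (((a + b + 1 + 1 : ℕ) : ℤ) - M) = 2 * (b + 1 : ℕ) - a := by push_cast; omega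
    have e3 : (((a + b + 1 : ℕ) : ℤ) - M) = 2 * (b + 1 : ℕ) - a - 1 := by push_cast; omega
    rw [e1, e2, e3, recipFactorial_sub_one, recipFactorial_natCast,
      Nat.factorial_succ (a + b + 1), show a + (b + 1) = a + b + 1 by ring]
    push_cast
    field_simp
    ring

lemma sum_revCoeff_mul_chooseSum {n b : ℕ} (hb : b ≤ n) :
    ∑ a ∈ range (n + 1), revCoeff n a * chooseSum (a + b + 1) (2 * a + 1 - b) = 2 ^ b := by
  induction b with
  | zero =>
    have h := two_mul_sum_two_pow_mul_revCoeff n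
    rw [sum_range_succ', revCoeff_zero] at h
    rw [sum_range_succ', revCoeff_zero]
    have e : ∀ a ∈ range n, revCoeff n (a + 1) * chooseSum (a + 1 + 0 + 1) (2 * (a + 1) + 1 - 0) =
        2 * (2 ^ (a + 1) * revCoeff n (a + 1)) := fun a _ => by
      rw [chooseSum_of_lt (by omega)]
      ring
    have e0 : chooseSum (0 + 0 + 1) (2 * 0 + 1 - 0) = 1 := by norm_num [chooseSum]
    rw [sum_congr rfl e, ← mul_sum, e0]
    linear_combination h
  | succ b ih =>
    have hk := sum_revCoeff_mul_kernelCoeff (n := n) (b := b) hb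
    have e : ∀ a ∈ range (n + 1),
        revCoeff n a * chooseSum (a + (b + 1) + 1) (2 * a + 1 - (b + 1)) =
          2 * (revCoeff n a * chooseSum (a + b + 1) (2 * a + 1 - b)) -
            (3 * b + 4) * (revCoeff n a * kernelCoeff (b + 1) a) := fun a _ => by
      rw [show 2 * a + 1 - (b + 1) = 2 * a - b by omega, show a + (b + 1) + 1 = a + b + 2 by ring]
      linear_combination revCoeff n a * chooseSum_kernel a b
    rw [sum_congr rfl e, sum_sub_distrib, ← mul_sum, ← mul_sum, hk, ih (by omega)]
    ring

lemma sum_pnk_mul_chooseSum {n m : ℕ} (hm : m ≤ n) :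
    ∑ k ∈ range (n + 1), pnk n k 0 * chooseSum (2 * n + 1 - m - k) (n + m + 1 - 2 * k) =
      2 ^ (n - m) := by
  rw [← sum_revCoeff_mul_chooseSum (Nat.sub_le n m), ← sum_range_reflect]
  refine sum_congr rfl fun a ha => ?_
  have ha' : a ≤ n := Nat.lt_succ_iff.1 (mem_range.1 ha)
  rw [pnk_eq_revCoeff (by omega), show n - (n + 1 - 1 - a) = a by omega,
    show 2 * n + 1 - m - (n + 1 - 1 - a) = a + (n - m) + 1 by omega,
    show n + m + 1 - 2 * (n + 1 - 1 - a) = 2 * a + 1 - (n - m) by omega]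

lemma pnk_self (n : ℕ) : pnk n n 0 = (-1) ^ n := by
  rw [pnk_eq_revCoeff le_rfl, Nat.sub_self, revCoeff_zero]

lemma ne_zero_of_mem_sphere_half {r : ℂ} (hr : r ∈ Metric.sphere (0 : ℂ) (1 / 2)) : r ≠ 0 := by
  rintro rfl
  norm_num at hr

lemma one_sub_ne_zero_of_mem_closedBall_half {r : ℂ}
    (hr : r ∈ Metric.closedBall (0 : ℂ) (1 / 2)) : 1 - r ≠ 0 := by
  intro h
  rw [← sub_eq_zero.1 h] at hr
  norm_num at hr

lemma circleIntegrable_eval_mul_zpow (P : Polynomial ℂ) (e : ℤ) :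
    CircleIntegrable (fun r => P.eval r * r ^ e) 0 (1 / 2) :=
  ContinuousOn.circleIntegrable (by norm_num) <| P.continuous.continuousOn.mul <|
    continuousOn_id.zpow₀ _ fun _ hr => Or.inl (ne_zero_of_mem_sphere_half hr)

/-- Coefficient extraction from a polynomial by a contour integral. -/
lemma circleIntegral_eval_mul_zpow (P : Polynomial ℂ) (d : ℕ) :
    (∮ r in C(0, 1 / 2), P.eval r * r ^ (-(d : ℤ) - 1)) =
      2 * (Real.pi : ℂ) * Complex.I * P.coeff d := by
  induction P using Polynomial.induction_on' with
  | add p q hp hq =>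
    simp only [Polynomial.eval_add, add_mul, Polynomial.coeff_add, mul_add]
    rw [circleIntegral.integral_add (circleIntegrable_eval_mul_zpow p _)
      (circleIntegrable_eval_mul_zpow q _), hp, hq]
  | monomial j c =>
    have h : Set.EqOn (fun r : ℂ => (Polynomial.monomial j c).eval r * r ^ (-(d : ℤ) - 1))
        (fun r => c * (r - 0) ^ ((j : ℤ) - d - 1)) (Metric.sphere 0 (1 / 2)) := fun r hr => by
      have hr0 := ne_zero_of_mem_sphere_half hr
      simp only [Polynomial.eval_monomial, sub_zero]
      rw [mul_assoc, ← zpow_natCast, ← zpow_add₀ hr0]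
      ring_nf
    rw [circleIntegral.integral_congr (by norm_num) h, circleIntegral.integral_const_mul,
      Polynomial.coeff_monomial]
    split_ifs with hj
    · subst hj
      have e : ((j : ℤ) - j - 1) = -1 := by ring
      simp only [e, zpow_neg_one]
      rw [circleIntegral.integral_sub_center_inv 0 (by norm_num)]
      ring
    · rw [circleIntegral.integral_sub_zpow_of_ne (by omega)]
      simp

lemma diffContOnCl_eval_mul_one_sub_inv (P : Polynomial ℂ) :
    DiffContOnCl ℂ (fun r => P.eval r * (1 - r)⁻¹) (Metric.ball 0 (1 / 2)) := by
  refine DifferentiableOn.diffContOnCl fun r hr => ?_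
  rw [closure_ball _ (by norm_num)] at hr
  have h := one_sub_ne_zero_of_mem_closedBall_half hr
  exact (P.differentiable.differentiableAt.mul
    ((differentiableAt_id.const_sub 1).inv h)).differentiableWithinAt

/-- Extraction of a coefficient of `P(r) / (1 - r)`, a partial sum of coefficients of `P`. -/
lemma circleIntegral_eval_mul_one_sub_inv_mul_zpow (P : Polynomial ℂ) (i : ℕ) :
    (∮ r in C(0, 1 / 2), P.eval r * (1 - r)⁻¹ * r ^ (-(i : ℤ))) =
      2 * (Real.pi : ℂ) * Complex.I * ∑ j ∈ range i, P.coeff j := by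
  cases i with
  | zero =>
    simp only [Nat.cast_zero, neg_zero, zpow_zero, mul_one, range_zero, sum_empty, mul_zero]
    exact (diffContOnCl_eval_mul_one_sub_inv P).circleIntegral_eq_zero (by norm_num)
  | succ d =>
    set Q : Polynomial ℂ := P * ∑ s ∈ range (d + 1), Polynomial.X ^ s with hQ
    have h : Set.EqOn (fun r : ℂ => P.eval r * (1 - r)⁻¹ * r ^ (-((d + 1 : ℕ) : ℤ)))
        (fun r => Q.eval r * r ^ (-(d : ℤ) - 1) + P.eval r * (1 - r)⁻¹)
        (Metric.sphere 0 (1 / 2)) := fun r hr => by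
      have hr0 := ne_zero_of_mem_sphere_half hr
      have hr1 := one_sub_ne_zero_of_mem_closedBall_half (Metric.sphere_subset_closedBall hr)
      have hgeom : (∑ s ∈ range (d + 1), r ^ s) = (1 - r ^ (d + 1)) * (1 - r)⁻¹ := by
        rw [eq_mul_inv_iff_mul_eq₀ hr1, geom_sum_mul_neg]
      have hz : r ^ (-(d : ℤ) - 1) = (r ^ (d + 1))⁻¹ := by
        rw [← zpow_natCast, ← zpow_neg]; push_cast; ring_nf
      have hz' : r ^ (-((d + 1 : ℕ) : ℤ)) = (r ^ (d + 1))⁻¹ := by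
        rw [zpow_neg, zpow_natCast]
      simp only [hQ, Polynomial.eval_mul, Polynomial.eval_finsetSum, Polynomial.eval_pow,
        Polynomial.eval_X, hgeom, hz, hz']
      field_simp
      ring
    have hinteg : CircleIntegrable (fun r : ℂ => P.eval r * (1 - r)⁻¹) 0 (1 / 2) := by
      refine ContinuousOn.circleIntegrable (by norm_num) ?_
      refine (diffContOnCl_eval_mul_one_sub_inv P).continuousOn.mono ?_
      rw [closure_ball _ (by norm_num)]
      exact Metric.sphere_subset_closedBall
    rw [circleIntegral.integral_congr (by norm_num) h,
      circleIntegral.integral_add (circleIntegrable_eval_mul_zpow Q _) hinteg,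
      (diffContOnCl_eval_mul_one_sub_inv P).circleIntegral_eq_zero (by norm_num),
      circleIntegral_eval_mul_zpow, add_zero, hQ, mul_sum, Polynomial.finsetSum_coeff]
    congr 1
    rw [← sum_range_reflect]
    refine sum_congr rfl fun j hj => ?_
    have hj' := mem_range.1 hj
    rw [Polynomial.coeff_mul_X_pow', if_pos (by omega)]
    congr 1
    omega

/-- The polynomial whose coefficients are the values of `h1b n`. -/
noncomputable def colPoly (n : ℕ) : Polynomial ℂ :=
  ∑ k ∈ range (n + 1), Polynomial.C ((pnk n k 0 : ℚ) : ℂ) *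
    ((1 + Polynomial.X) ^ (n - k) * Polynomial.X ^ (2 * k))

lemma two_pi_I_inv_mul_cancel (z : ℂ) :
    1 / (2 * (Real.pi : ℂ) * Complex.I) * (2 * (Real.pi : ℂ) * Complex.I * z) = z := by
  have h := Complex.two_pi_I_ne_zero
  field_simp

lemma h1b_eq_coeff (n i : ℕ) : h1b n i = (colPoly n).coeff i := by
  rw [h1b, colPoly, Polynomial.finsetSum_coeff]
  refine sum_congr rfl fun k _ => ?_
  have h : Set.EqOn (fun r : ℂ => (1 + r) ^ (n - k) * r ^ (2 * (k : ℤ) - (i : ℤ) - 1))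
      (fun r => ((1 + Polynomial.X) ^ (n - k) * Polynomial.X ^ (2 * k) : Polynomial ℂ).eval r *
        r ^ (-(i : ℤ) - 1)) (Metric.sphere 0 (1 / 2)) := fun r hr => by
    have hr0 := ne_zero_of_mem_sphere_half hr
    simp only [Polynomial.eval_mul, Polynomial.eval_pow, Polynomial.eval_add, Polynomial.eval_one,
      Polynomial.eval_X]
    rw [mul_assoc, ← zpow_natCast r (2 * k), ← zpow_add₀ hr0]
    push_cast
    ring_nf
  rw [circleIntegral.integral_congr (by norm_num) h, circleIntegral_eval_mul_zpow, mul_assoc,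
    two_pi_I_inv_mul_cancel, Polynomial.coeff_C_mul]

lemma h0b_eq_sum_coeff (n i : ℕ) :
    h0b n i = -(((i + 1) % 2 : ℕ) : ℂ) + ∑ j ∈ range i, (colPoly n).coeff j := by
  rw [h0b]
  congr 1
  simp only [colPoly, Polynomial.finsetSum_coeff]
  rw [sum_comm]
  refine sum_congr rfl fun k _ => ?_
  have h : Set.EqOn (fun r : ℂ => (1 + r) ^ (n - k) * (1 - r)⁻¹ * r ^ (2 * (k : ℤ) - (i : ℤ)))
      (fun r => ((1 + Polynomial.X) ^ (n - k) * Polynomial.X ^ (2 * k) : Polynomial ℂ).eval r *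
        (1 - r)⁻¹ * r ^ (-(i : ℤ))) (Metric.sphere 0 (1 / 2)) := fun r hr => by
    have hr0 := ne_zero_of_mem_sphere_half hr
    simp only [Polynomial.eval_mul, Polynomial.eval_pow, Polynomial.eval_add, Polynomial.eval_one,
      Polynomial.eval_X]
    rw [sub_eq_add_neg (2 * (k : ℤ)), zpow_add₀ hr0, show 2 * (k : ℤ) = (2 * k : ℕ) by push_cast; rfl,
      zpow_natCast]
    ring
  rw [circleIntegral.integral_congr (by norm_num) h, circleIntegral_eval_mul_one_sub_inv_mul_zpow,
    mul_assoc, two_pi_I_inv_mul_cancel, mul_sum]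
  simp only [Polynomial.coeff_C_mul]

lemma genBinom_succ_succ (m : ℤ) (l : ℕ) :
    genBinom (m + 1) (l + 1) = genBinom m l + genBinom m (l + 1) := by
  have h : ∏ t ∈ range (l + 1), (((m + 1 : ℤ) : ℂ) - (t : ℂ)) =
      (∏ t ∈ range l, ((m : ℂ) - t)) * (m + 1) := by
    rw [prod_range_succ']
    push_cast
    congr 1
    · exact prod_congr rfl fun t _ => by ring
    · ring
  have hl : ((l : ℂ) + 1) ≠ 0 := by exact_mod_cast l.succ_ne_zero
  have hf : ((l.factorial : ℕ) : ℂ) ≠ 0 := by exact_mod_cast l.factorial_ne_zero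
  rw [genBinom, genBinom, genBinom, h, prod_range_succ, Nat.factorial_succ]
  push_cast
  field_simp
  ring

lemma genBinom_natCast (m l : ℕ) : genBinom (m : ℤ) l = (m.choose l : ℂ) := by
  induction m generalizing l with
  | zero =>
    cases l with
    | zero => simp [genBinom]
    | succ l => simp [genBinom, prod_range_succ']
  | succ m ih =>
    cases l with
    | zero => simp [genBinom]
    | succ l =>
      rw [Nat.cast_succ, genBinom_succ_succ, ih, ih, Nat.choose_succ_succ]
      push_cast
      rfl

lemma genBinom_natCast_self_succ (l : ℕ) : genBinom (l : ℤ) (l + 1) = 0 := by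
  rw [genBinom_natCast, Nat.choose_succ_self, Nat.cast_zero]

/-- The values of the column on vertices `(i, i + 2j)`. -/
noncomputable def evenCol (n i j : ℕ) : ℂ :=
  (-1) ^ j * ∑ l ∈ range (j + 1), genBinom (j : ℤ) l * h0b n (i + l)

/-- The values of the column on vertices `(i, i + 2j + 1)`. -/
noncomputable def oddCol (n i j : ℕ) : ℂ :=
  ∑ l ∈ range (i + 1), (-1) ^ (j + l) * genBinom ((j : ℤ) - 1 + (l : ℤ)) l * h1b n (i - l)

lemma evenCol_zero (n i : ℕ) : evenCol n i 0 = h0b n i := by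
  simp [evenCol, genBinom]

open PowerSeries in
/-- A binomial sum of shifted values as a coefficient of `(1 + X) ^ N * mk f`. -/
lemma sum_choose_mul_eq_coeff (f : ℕ → ℂ) (N i : ℕ) :
    ∑ l ∈ range (N + 1), (N.choose l : ℂ) * f (i + l) =
      coeff (i + N) ((1 + X) ^ N * PowerSeries.mk f) := by
  induction N generalizing i with
  | zero => simp
  | succ N ih =>
    have h := sum_choose_succ_mul (fun l _ => f (i + l)) N
    have h2 : ∀ l ∈ range (N + 1), (N.choose l : ℂ) * f (i + (l + 1)) =
        (N.choose l : ℂ) * f (i + 1 + l) := fun l _ => by rw [add_comm l 1, add_assoc]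
    rw [sum_congr rfl h2, ih, ih] at h
    rw [h, pow_succ', mul_assoc, add_mul, one_mul, map_add, ← add_assoc, coeff_succ_X_mul,
      show i + 1 + N = i + N + 1 by ring, add_comm]

lemma evenCol_eq_coeff (n i j : ℕ) :
    evenCol n i j = (-1) ^ j *
      PowerSeries.coeff (i + j) ((1 + PowerSeries.X) ^ j * PowerSeries.mk (h0b n)) := by
  rw [evenCol, ← sum_choose_mul_eq_coeff]
  simp only [genBinom_natCast]

lemma evenCol_succ (n i j : ℕ) :
    evenCol n i (j + 1) = -(evenCol n i j + evenCol n (i + 1) j) := by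
  simp only [evenCol_eq_coeff]
  rw [pow_succ' (1 + PowerSeries.X), mul_assoc, add_mul, one_mul, map_add, ← add_assoc,
    PowerSeries.coeff_succ_X_mul, show i + 1 + j = i + j + 1 by ring]
  ring

open PowerSeries in
lemma coeff_mul_mk_one (P : PowerSeries ℂ) (d : ℕ) :
    coeff d (P * PowerSeries.mk 1) = ∑ j ∈ range (d + 1), coeff j P := by
  rw [coeff_mul, Nat.sum_antidiagonal_eq_sum_range_succ_mk]
  simp

open PowerSeries in
lemma coeff_one_add_X_pow_series (N j : ℕ) :
    coeff j ((1 + X : PowerSeries ℂ) ^ N) = (N.choose j : ℂ) := by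
  have h : ((1 + X : PowerSeries ℂ) ^ N) = (((1 + Polynomial.X) ^ N : Polynomial ℂ)) := by
    simp
  rw [h, Polynomial.coeff_coe, Polynomial.coeff_one_add_X_pow]

open PowerSeries in
lemma coeff_one_add_X_pow_mul_mk_one (N d : ℕ) :
    coeff d ((1 + X : PowerSeries ℂ) ^ N * PowerSeries.mk 1) = ((chooseSum N (d + 1) : ℚ) : ℂ) := by
  rw [coeff_mul_mk_one, chooseSum]
  simp only [coeff_one_add_X_pow_series]
  push_cast
  rfl

open PowerSeries in
lemma coe_colPoly (n : ℕ) :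
    (colPoly n : PowerSeries ℂ) =
      ∑ k ∈ range (n + 1), C ((pnk n k 0 : ℚ) : ℂ) * ((1 + X) ^ (n - k) * X ^ (2 * k)) := by
  rw [colPoly, ← Polynomial.coeToPowerSeries.ringHom_apply, map_sum]
  simp

open PowerSeries in
lemma mk_h0b (n : ℕ) :
    PowerSeries.mk (h0b n) = X * ((colPoly n : PowerSeries ℂ) * PowerSeries.mk 1) -
      PowerSeries.mk fun i => (((i + 1) % 2 : ℕ) : ℂ) := by
  ext i
  rw [map_sub, coeff_mk, coeff_mk, h0b_eq_sum_coeff]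
  cases i with
  | zero => simp
  | succ i =>
    rw [coeff_succ_X_mul, coeff_mul_mk_one]
    simp only [Polynomial.coeff_coe]
    ring

open PowerSeries in
lemma one_add_X_mul_mk_even :
    (1 + X) * (PowerSeries.mk fun i => (((i + 1) % 2 : ℕ) : ℂ)) = PowerSeries.mk 1 := by
  ext i
  rw [add_mul, one_mul, map_add]
  cases i with
  | zero => simp
  | succ i =>
    rw [coeff_succ_X_mul, coeff_mk, coeff_mk, coeff_mk, ← Nat.cast_add,
      show (i + 1 + 1) % 2 + (i + 1) % 2 = 1 by omega]
    simp

open PowerSeries in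
lemma coeff_one_add_X_pow_mul_colPoly {n m : ℕ} (hm : m ≤ n) :
    coeff (n + m) ((1 + X) ^ (n - m + 1) * ((colPoly n : PowerSeries ℂ) * PowerSeries.mk 1)) =
      2 ^ (n - m) := by
  have h : (((∑ k ∈ range (n + 1), pnk n k 0 *
      chooseSum (2 * n + 1 - m - k) (n + m + 1 - 2 * k) : ℚ)) : ℂ) = 2 ^ (n - m) := by
    rw [sum_pnk_mul_chooseSum hm]
    push_cast
    rfl
  rw [← h, coe_colPoly, sum_mul, mul_sum, map_sum]
  push_cast
  refine sum_congr rfl fun k hk => ?_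
  have hk' := mem_range.1 hk
  have e : (1 + X) ^ (n - m + 1) * (C ((pnk n k 0 : ℚ) : ℂ) * ((1 + X) ^ (n - k) * X ^ (2 * k)) *
      PowerSeries.mk 1) = C ((pnk n k 0 : ℚ) : ℂ) *
        ((1 + X) ^ (2 * n + 1 - m - k) * PowerSeries.mk 1 * X ^ (2 * k)) := by
    rw [show 2 * n + 1 - m - k = (n - m + 1) + (n - k) by omega, pow_add]
    ring
  rw [e, coeff_C_mul, coeff_mul_X_pow']
  split_ifs with h2
  · rw [coeff_one_add_X_pow_mul_mk_one, show n + m - 2 * k + 1 = n + m + 1 - 2 * k by omega]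
  · rw [show n + m + 1 - 2 * k = 0 by omega]
    simp [chooseSum]

/-- The even values extended across the upper boundary vanish there. -/
lemma evenCol_boundary {n m : ℕ} (hm : m ≤ n) : evenCol n (2 * m) (n - m + 1) = 0 := by
  rw [evenCol_eq_coeff, mk_h0b, mul_sub, map_sub, mul_left_comm,
    show 2 * m + (n - m + 1) = n + m + 1 by omega, PowerSeries.coeff_succ_X_mul,
    coeff_one_add_X_pow_mul_colPoly hm, pow_succ (1 + PowerSeries.X), mul_assoc,
    one_add_X_mul_mk_even, coeff_one_add_X_pow_mul_mk_one, chooseSum_of_lt (by omega)]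
  push_cast
  ring

lemma h1b_two_mul (n : ℕ) : h1b n (2 * n) = (-1) ^ n := by
  rw [h1b_eq_coeff, colPoly, Polynomial.finsetSum_coeff, sum_range_succ, sum_eq_zero, pnk_self]
  · rw [Polynomial.coeff_C_mul, Polynomial.coeff_mul_X_pow', if_pos le_rfl]
    simp
  · intro k hk
    have hk' := mem_range.1 hk
    rw [Polynomial.coeff_C_mul, Polynomial.coeff_mul_X_pow', if_pos (by omega),
      Polynomial.coeff_one_add_X_pow, Nat.choose_eq_zero_of_lt (by omega)]
    simp

lemma h0b_add_two (n i : ℕ) : h0b n (i + 2) = h0b n i + h1b n i + h1b n (i + 1) := by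
  rw [h0b_eq_sum_coeff, h0b_eq_sum_coeff, h1b_eq_coeff, h1b_eq_coeff, sum_range_succ,
    sum_range_succ, show (i + 2 + 1) % 2 = (i + 1) % 2 by omega]
  ring

lemma h0b_one (n : ℕ) : h0b n 1 = h1b n 0 := by
  simp [h0b_eq_sum_coeff, h1b_eq_coeff]

lemma h0b_two_mul_add_one (n : ℕ) : h0b n (2 * n + 1) = h0b n (2 * n) + 1 + (-1) ^ n := by
  rw [← h1b_two_mul, h0b_eq_sum_coeff, h0b_eq_sum_coeff, h1b_eq_coeff, sum_range_succ,
    show (2 * n + 1 + 1) % 2 = 0 by omega, show (2 * n + 1) % 2 = 1 by omega]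
  push_cast
  ring

lemma h0b_two_mul (n : ℕ) : h0b n (2 * n) = if n % 2 = 1 then 0 else -1 := by
  have h := evenCol_boundary (le_refl n)
  rw [Nat.sub_self, evenCol_succ, evenCol_zero, evenCol_zero] at h
  rw [h0b_two_mul_add_one] at h
  rcases Nat.mod_two_eq_zero_or_one n with hn | hn
  · rw [(Nat.even_iff.2 hn).neg_one_pow] at h
    rw [if_neg (by omega)]
    linear_combination -h / 2
  · rw [(Nat.odd_iff.2 hn).neg_one_pow] at h
    rw [if_pos hn]
    linear_combination -h / 2

/-- The power series `(1 + X) ^ (-j)`. -/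
noncomputable def negPowSeries (j : ℕ) : PowerSeries ℂ :=
  PowerSeries.mk fun l => (-1) ^ l * genBinom ((j : ℤ) - 1 + l) l

lemma negPowSeries_zero : negPowSeries 0 = 1 := by
  ext l
  rw [negPowSeries, PowerSeries.coeff_mk, PowerSeries.coeff_one]
  cases l with
  | zero => simp [genBinom]
  | succ l =>
    rw [if_neg l.succ_ne_zero, show ((0 : ℕ) : ℤ) - 1 + (l + 1 : ℕ) = (l : ℤ) by push_cast; ring,
      genBinom_natCast_self_succ, mul_zero]

open PowerSeries in
lemma one_add_X_mul_negPowSeries_succ (j : ℕ) :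
    (1 + X) * negPowSeries (j + 1) = negPowSeries j := by
  ext l
  rw [add_mul, one_mul, map_add]
  cases l with
  | zero => simp [negPowSeries, genBinom]
  | succ l =>
    rw [coeff_succ_X_mul]
    simp only [negPowSeries, coeff_mk]
    rw [show ((j + 1 : ℕ) : ℤ) - 1 + (l + 1 : ℕ) = (j : ℤ) + l + 1 by push_cast; ring,
      show ((j + 1 : ℕ) : ℤ) - 1 + l = (j : ℤ) + l by push_cast; ring,
      show (j : ℤ) - 1 + (l + 1 : ℕ) = (j : ℤ) + l by push_cast; ring, genBinom_succ_succ]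
    ring

lemma negPowSeries_mul_one_add_X_pow (j d : ℕ) :
    negPowSeries j * (1 + PowerSeries.X) ^ (j + d) = (1 + PowerSeries.X) ^ d := by
  induction j with
  | zero => rw [negPowSeries_zero, one_mul, zero_add]
  | succ j ih =>
    rw [← ih, ← one_add_X_mul_negPowSeries_succ j, show j + 1 + d = j + d + 1 by ring, pow_succ]
    ring

lemma oddCol_eq_coeff (n i j : ℕ) :
    oddCol n i j =
      (-1) ^ j * PowerSeries.coeff i (negPowSeries j * (colPoly n : PowerSeries ℂ)) := by
  rw [oddCol, PowerSeries.coeff_mul, Nat.sum_antidiagonal_eq_sum_range_succ_mk, mul_sum]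
  refine sum_congr rfl fun l _ => ?_
  rw [negPowSeries, PowerSeries.coeff_mk, Polynomial.coeff_coe, h1b_eq_coeff, pow_add]
  ring

lemma oddCol_zero_right (n i : ℕ) : oddCol n i 0 = h1b n i := by
  rw [oddCol_eq_coeff, negPowSeries_zero, one_mul, pow_zero, one_mul, Polynomial.coeff_coe,
    h1b_eq_coeff]

lemma oddCol_succ_succ (n i j : ℕ) :
    oddCol n i (j + 1) + oddCol n (i + 1) (j + 1) + oddCol n (i + 1) j = 0 := by
  simp only [oddCol_eq_coeff]
  rw [← one_add_X_mul_negPowSeries_succ j, mul_assoc, add_mul, one_mul, map_add,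
    PowerSeries.coeff_succ_X_mul]
  ring

lemma oddCol_zero_succ (n j : ℕ) : oddCol n 0 (j + 1) + oddCol n 0 j = 0 := by
  simp only [oddCol_eq_coeff]
  rw [← one_add_X_mul_negPowSeries_succ j, mul_assoc, add_mul, one_mul, map_add,
    PowerSeries.coeff_zero_X_mul]
  ring

/-- The odd values extended across the upper boundary vanish there. -/
lemma oddCol_boundary {n m : ℕ} (hm : m ≤ n) : oddCol n (2 * m + 1) (n - m) = 0 := by
  rw [oddCol_eq_coeff, coe_colPoly, mul_sum, map_sum, sum_eq_zero, mul_zero]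
  intro k _
  rw [mul_left_comm, PowerSeries.coeff_C_mul, ← mul_assoc, PowerSeries.coeff_mul_X_pow']
  split_ifs with h
  · rw [show n - k = (n - m) + (m - k) by omega, negPowSeries_mul_one_add_X_pow,
      coeff_one_add_X_pow_series, Nat.choose_eq_zero_of_lt (by omega)]
    simp
  · rw [mul_zero]

lemma mem_Vfin {n : ℕ} {x : ℤ × ℤ} : x ∈ Vfin n ↔ memV n x := by
  simp only [Vfin, mem_filter, mem_product, mem_Icc, memV]
  omega

/-- The candidate column, extended by zero outside `V_n`. -/
noncomputable def extCol (n : ℕ) (x : ℤ × ℤ) : ℂ := if x ∈ Vfin n then vfun n x else 0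

lemma extCol_of_not_mem {n : ℕ} {x : ℤ × ℤ} (h : ¬ memV n x) : extCol n x = 0 :=
  if_neg (mt mem_Vfin.1 h)

lemma extCol_even {n i j : ℕ} (hi : i ≤ 2 * n) (hj : i + 2 * j ≤ 2 * n + 1) :
    extCol n ((i : ℤ), (i : ℤ) + 2 * j) = evenCol n i j := by
  rw [extCol, if_pos (mem_Vfin.2 (by simp only [memV]; omega)), vfun]
  have hd : ((i : ℤ) + 2 * j - i) / 2 = j := by omega
  by_cases hc : i = 2 * n
  · obtain rfl : j = 0 := by omega
    subst hc
    rw [evenCol_zero, h0b_two_mul]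
    simp only [bvertex, Prod.mk.injEq]
    rcases Nat.mod_two_eq_zero_or_one n with hn | hn <;> simp [hn]
  · rw [if_neg (by simp only [bvertex, Prod.mk.injEq]; omega),
      if_neg (by simp only [Prod.mk.injEq]; omega), if_neg (by dsimp only; omega), evenCol]
    dsimp only
    rw [hd, Int.toNat_natCast, Int.toNat_natCast]

lemma extCol_odd {n i j : ℕ} (hi : i < 2 * n) (hj : i + 2 * j ≤ 2 * n) :
    extCol n ((i : ℤ), (i : ℤ) + 2 * j + 1) = oddCol n i j := by
  rw [extCol, if_pos (mem_Vfin.2 (by simp only [memV]; omega)), vfun,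
    if_neg (by simp only [bvertex, Prod.mk.injEq]; omega),
    if_neg (by simp only [Prod.mk.injEq]; omega), if_pos (by dsimp only; omega), oddCol]
  dsimp only
  rw [show ((i : ℤ) + 2 * j + 1 - i - 1) / 2 = j by omega, Int.toNat_natCast, Int.toNat_natCast]

lemma extCol_corner (n : ℕ) : extCol n (2 * (n : ℤ), 2 * (n : ℤ) + 1) = 0 := by
  rcases Nat.mod_two_eq_zero_or_one n with hn | hn
  · have h : (2 * (n : ℤ), 2 * (n : ℤ) + 1) = bvertex n := by simp [bvertex, hn]
    rw [extCol, vfun, if_pos h, ite_self]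
  · exact extCol_of_not_mem fun h => h.2.2.2.2 ⟨hn, rfl, rfl⟩

lemma kfunC_sub_odd {a b : ℤ} (h : (a + b) % 2 = 1) (y : ℤ × ℤ) :
    kfunC (a, b) y - kfunC y (a, b) =
      -((if y = (a + 1, b) then 1 else 0) + (if y = (a, b + 1) then 1 else 0) +
        if y = (a, b - 1) then 1 else 0) := by
  obtain ⟨c, d⟩ := y
  have h1 : kfunC (a, b) (c, d) = 0 := if_neg (by dsimp only; omega)
  rw [h1, kfunC]
  simp only [Prod.mk.injEq]
  by_cases e1 : c = a + 1 ∧ d = b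
  · rw [if_pos (by omega), if_pos e1, if_neg (by omega), if_neg (by omega)]; ring
  by_cases e2 : c = a ∧ d = b + 1
  · rw [if_pos (by omega), if_neg e1, if_pos e2, if_neg (by omega)]; ring
  by_cases e3 : c = a ∧ d = b - 1
  · rw [if_pos (by omega), if_neg e1, if_neg e2, if_pos e3]; ring
  rw [if_neg (by omega), if_neg e1, if_neg e2, if_neg e3]; ring

lemma kfunC_sub_even {a b : ℤ} (h : (a + b) % 2 = 0) (hab : a ≠ b) (y : ℤ × ℤ) :
    kfunC (a, b) y - kfunC y (a, b) =
      (if y = (a - 1, b) then 1 else 0) + (if y = (a, b + 1) then 1 else 0) +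
        if y = (a, b - 1) then 1 else 0 := by
  obtain ⟨c, d⟩ := y
  have h1 : kfunC (c, d) (a, b) = 0 := if_neg (by dsimp only; omega)
  rw [h1, kfunC]
  simp only [Prod.mk.injEq]
  by_cases e1 : c = a - 1 ∧ d = b
  · rw [if_pos (by omega), if_pos e1, if_neg (by omega), if_neg (by omega)]; ring
  by_cases e2 : c = a ∧ d = b + 1
  · rw [if_pos (by omega), if_neg e1, if_pos e2, if_neg (by omega)]; ring
  by_cases e3 : c = a ∧ d = b - 1
  · rw [if_pos (by omega), if_neg e1, if_neg e2, if_pos e3]; ring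
  rw [if_neg (by omega), if_neg e1, if_neg e2, if_neg e3]; ring

lemma kfunC_sub_diag (a : ℤ) (y : ℤ × ℤ) :
    kfunC (a, a) y - kfunC y (a, a) =
      (if y = (a - 1, a) then 1 else 0) + (if y = (a, a + 1) then 1 else 0) +
        (if y = (a, a - 1) then 1 else 0) + (if y = (a - 1, a - 1) then 1 else 0) -
        if y = (a + 1, a + 1) then 1 else 0 := by
  obtain ⟨c, d⟩ := y
  have h1 : kfunC (c, d) (a, a) = if c = a + 1 ∧ d = a + 1 then 1 else 0 := by
    rw [kfunC]
    exact if_congr (by dsimp only; omega) rfl rfl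
  rw [h1, kfunC]
  simp only [Prod.mk.injEq]
  congr 1
  by_cases e1 : c = a - 1 ∧ d = a
  · rw [if_pos (by omega), if_pos e1, if_neg (by omega), if_neg (by omega), if_neg (by omega)]
    ring
  by_cases e2 : c = a ∧ d = a + 1
  · rw [if_pos (by omega), if_neg e1, if_pos e2, if_neg (by omega), if_neg (by omega)]; ring
  by_cases e3 : c = a ∧ d = a - 1
  · rw [if_pos (by omega), if_neg e1, if_neg e2, if_pos e3, if_neg (by omega)]; ring
  by_cases e4 : c = a - 1 ∧ d = a - 1
  · rw [if_pos (Or.inr (Or.inr ⟨trivial, e4.1.trans e4.2.symm, e4.1⟩)), if_neg e1, if_neg e2,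
      if_neg e3, if_pos e4]
    ring
  rw [if_neg (by omega), if_neg e1, if_neg e2, if_neg e3, if_neg e4]; ring

lemma sum_indicator_mul_vfun (n : ℕ) (z : ℤ × ℤ) :
    ∑ y ∈ Vfin n, (if y = z then 1 else 0) * vfun n y = extCol n z := by
  simp [extCol]

/-- The row of `K_n · v` at the vertex `x`. -/
noncomputable def rowSum (n : ℕ) (x : ℤ × ℤ) : ℂ :=
  ∑ y ∈ Vfin n, (kfunC x y - kfunC y x) * vfun n y

lemma rowSum_odd (n : ℕ) {a b : ℤ} (h : (a + b) % 2 = 1) :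
    rowSum n (a, b) = -(extCol n (a + 1, b) + extCol n (a, b + 1) + extCol n (a, b - 1)) := by
  simp only [rowSum, kfunC_sub_odd h, neg_mul, add_mul, sum_neg_distrib, sum_add_distrib,
    sum_indicator_mul_vfun]

lemma rowSum_even (n : ℕ) {a b : ℤ} (h : (a + b) % 2 = 0) (hab : a ≠ b) :
    rowSum n (a, b) = extCol n (a - 1, b) + extCol n (a, b + 1) + extCol n (a, b - 1) := by
  simp only [rowSum, kfunC_sub_even h hab, add_mul, sum_add_distrib, sum_indicator_mul_vfun]

lemma rowSum_diag (n : ℕ) (a : ℤ) :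
    rowSum n (a, a) = extCol n (a - 1, a) + extCol n (a, a + 1) + extCol n (a, a - 1) +
      extCol n (a - 1, a - 1) - extCol n (a + 1, a + 1) := by
  simp only [rowSum, kfunC_sub_diag, sub_mul, add_mul, sum_sub_distrib, sum_add_distrib,
    sum_indicator_mul_vfun]

lemma rowSum_odd_eq {n i j : ℕ} (h : memV n ((i : ℤ), (i : ℤ) + 2 * j + 1)) :
    rowSum n ((i : ℤ), (i : ℤ) + 2 * j + 1) =
      if ((i : ℤ), (i : ℤ) + 2 * j + 1) = bvertex n then 1 else 0 := by
  simp only [memV] at h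
  rw [rowSum_odd n (by omega), add_sub_cancel_right, extCol_even (by omega) (by omega)]
  by_cases hi : i = 2 * n
  · obtain rfl : j = 0 := by omega
    subst hi
    rw [if_pos (by simp only [bvertex, Prod.mk.injEq]; omega), evenCol_zero, h0b_two_mul,
      if_neg (by omega), extCol_of_not_mem (by simp only [memV]; omega),
      extCol_of_not_mem (by simp only [memV]; omega)]
    ring
  · have e1 : extCol n ((i : ℤ) + 1, (i : ℤ) + 2 * j + 1) = evenCol n (i + 1) j := by
      rw [← extCol_even (by omega) (by omega)]
      push_cast
      ring_nf
    have e2 : extCol n ((i : ℤ), (i : ℤ) + 2 * j + 1 + 1) = evenCol n i (j + 1) := by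
      rcases Nat.lt_or_ge (i + 2 * j) (2 * n) with hlt | hge
      · rw [← extCol_even (by omega) (by omega)]
        push_cast
        ring_nf
      · obtain ⟨m, rfl⟩ : ∃ m, i = 2 * m := ⟨n - j, by omega⟩
        rw [extCol_of_not_mem (by simp only [memV]; omega), show j = n - m by omega,
          evenCol_boundary (by omega)]
    rw [e1, e2, if_neg (by simp only [bvertex, Prod.mk.injEq]; omega), evenCol_succ]
    ring

lemma rowSum_even_eq {n i j : ℕ} (h : memV n ((i : ℤ), (i : ℤ) + 2 * (j + 1 : ℕ))) :
    rowSum n ((i : ℤ), (i : ℤ) + 2 * (j + 1 : ℕ)) =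
      if ((i : ℤ), (i : ℤ) + 2 * (j + 1 : ℕ)) = bvertex n then 1 else 0 := by
  simp only [memV] at h
  rw [rowSum_even n (by omega) (by omega), if_neg (by simp only [bvertex, Prod.mk.injEq]; omega)]
  have e2 : extCol n ((i : ℤ), (i : ℤ) + 2 * (j + 1 : ℕ) + 1) = oddCol n i (j + 1) := by
    rcases Nat.lt_or_ge (2 * n) (i + 2 * (j + 1)) with hlt | hge
    · obtain ⟨m, rfl⟩ : ∃ m, i = 2 * m + 1 := ⟨n - (j + 1), by omega⟩
      rw [extCol_of_not_mem (by simp only [memV]; omega), show j + 1 = n - m by omega,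
        oddCol_boundary (by omega)]
    · exact extCol_odd (by omega) (by omega)
  have e3 : extCol n ((i : ℤ), (i : ℤ) + 2 * (j + 1 : ℕ) - 1) = oddCol n i j := by
    rw [← extCol_odd (by omega) (by omega)]
    push_cast
    ring_nf
  rw [e2, e3]
  cases i with
  | zero =>
    rw [extCol_of_not_mem (by simp only [memV]; omega), zero_add, oddCol_zero_succ]
  | succ i =>
    have e1 : extCol n (((i + 1 : ℕ) : ℤ) - 1, ((i + 1 : ℕ) : ℤ) + 2 * (j + 1 : ℕ)) =
        oddCol n i (j + 1) := by
      rw [← extCol_odd (by omega) (by omega)]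
      push_cast
      ring_nf
    rw [e1, oddCol_succ_succ]

lemma extCol_diag {n i : ℕ} (hi : i ≤ 2 * n) : extCol n ((i : ℤ), (i : ℤ)) = h0b n i := by
  have h := extCol_even (j := 0) hi (by omega)
  rwa [evenCol_zero, Nat.cast_zero, mul_zero, add_zero] at h

lemma extCol_superdiag {n i : ℕ} (hi : i < 2 * n) :
    extCol n ((i : ℤ), (i : ℤ) + 1) = h1b n i := by
  have h := extCol_odd (j := 0) hi (by omega)
  rwa [oddCol_zero_right, Nat.cast_zero, mul_zero, add_zero] at h

lemma rowSum_diag_eq {n i : ℕ} (hi : i ≤ 2 * n) :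
    rowSum n ((i : ℤ), (i : ℤ)) = if ((i : ℤ), (i : ℤ)) = bvertex n then 1 else 0 := by
  rw [rowSum_diag, extCol_of_not_mem (x := ((i : ℤ), (i : ℤ) - 1)) (by simp only [memV]; omega)]
  have hlow : ∀ j : ℕ, i = j + 1 → extCol n ((i : ℤ) - 1, (i : ℤ)) = h1b n j ∧
      extCol n ((i : ℤ) - 1, (i : ℤ) - 1) = h0b n j := by
    rintro j rfl
    rw [← extCol_superdiag (by omega), ← extCol_diag (by omega)]
    push_cast
    simp
  have hlow0 : i = 0 → extCol n ((i : ℤ) - 1, (i : ℤ)) = 0 ∧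
      extCol n ((i : ℤ) - 1, (i : ℤ) - 1) = 0 := by
    rintro rfl
    constructor <;> exact extCol_of_not_mem (by simp only [memV]; omega)
  rcases hi.lt_or_eq with hlt | heq
  · have e : extCol n ((i : ℤ) + 1, (i : ℤ) + 1) = h0b n (i + 1) := by
      rw [← extCol_diag (by omega)]
      push_cast
      rfl
    rw [e, extCol_superdiag hlt, if_neg (by simp only [bvertex, Prod.mk.injEq]; omega)]
    cases i with
    | zero =>
      obtain ⟨h1, h2⟩ := hlow0 rfl
      rw [h1, h2, h0b_one]
      ring
    | succ i =>
      obtain ⟨h1, h2⟩ := hlow i rfl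
      rw [h1, h2, h0b_add_two]
      ring
  · have e : extCol n ((i : ℤ), (i : ℤ) + 1) = 0 := by
      rw [heq]
      push_cast
      exact extCol_corner n
    rw [e, extCol_of_not_mem (x := ((i : ℤ) + 1, (i : ℤ) + 1)) (by simp only [memV]; omega)]
    cases i with
    | zero =>
      obtain ⟨h1, h2⟩ := hlow0 rfl
      rw [h1, h2, if_neg (by simp only [bvertex, Prod.mk.injEq]; omega)]
      ring
    | succ i =>
      obtain ⟨h1, h2⟩ := hlow i rfl
      have hs := h0b_add_two n i
      rw [show i + 2 = 2 * n + 1 by omega, heq, h0b_two_mul_add_one, h0b_two_mul,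
        h1b_two_mul] at hs
      rw [h1, h2]
      rcases Nat.mod_two_eq_zero_or_one n with hn | hn
      · rw [if_neg (by omega)] at hs
        rw [if_neg (by simp only [bvertex, Prod.mk.injEq]; omega)]
        linear_combination -hs
      · rw [if_pos hn] at hs
        rw [if_pos (by simp only [bvertex, Prod.mk.injEq]; omega)]
        linear_combination -hs

lemma rowSum_eq {n : ℕ} {x : ℤ × ℤ} (hx : memV n x) :
    rowSum n x = if x = bvertex n then 1 else 0 := by
  obtain ⟨a, b⟩ := x
  have h := hx
  simp only [memV] at h
  lift a to ℕ using h.1 with i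
  obtain ⟨d, rfl⟩ : ∃ d : ℕ, b = i + d := ⟨(b - i).toNat, by omega⟩
  obtain ⟨j, rfl | rfl⟩ := d.even_or_odd'
  · cases j with
    | zero =>
      simpa using rowSum_diag_eq (n := n) (i := i) (by omega)
    | succ j =>
      rw [Nat.cast_mul, Nat.cast_ofNat] at hx ⊢
      exact rowSum_even_eq hx
  · rw [Nat.cast_succ, Nat.cast_mul, Nat.cast_ofNat, ← add_assoc] at hx ⊢
    exact rowSum_odd_eq hx

/-- `v` solves `K_n·v = e_{b_n}`; consequently, if `K_n` is invertible over `ℂ`, the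
column of `K_n⁻¹` at `b_n` is given by `v`. -/
theorem Kinv_column_b (n : ℕ) :
    (∀ x : ↥(Vfin n),
      ∑ y : ↥(Vfin n), KmatC n x y * vfun n y.val
        = if x.val = bvertex n then 1 else 0) ∧
    (IsUnit (KmatC n).det → ∀ (x : ↥(Vfin n)) (hb : bvertex n ∈ Vfin n),
      (KmatC n)⁻¹ x ⟨bvertex n, hb⟩ = vfun n x.val) := by
  have hK : ∀ x : ↥(Vfin n), ∑ y : ↥(Vfin n), KmatC n x y * vfun n y.val =
      if x.val = bvertex n then 1 else 0 := fun x =>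
    (sum_coe_sort (Vfin n) fun y => (kfunC x.val y - kfunC y x.val) * vfun n y).trans
      (rowSum_eq (mem_Vfin.1 x.2))
  refine ⟨hK, fun hdet x hb => ?_⟩
  have hcol : (KmatC n).mulVec (fun y => vfun n y.val) = Pi.single ⟨bvertex n, hb⟩ 1 := by
    funext z
    rw [Pi.single_apply]
    exact (hK z).trans (if_congr ⟨fun e => Subtype.ext e, congrArg Subtype.val⟩ rfl rfl)
  have h := congrArg (fun w => (KmatC n)⁻¹.mulVec w x) hcol
  rw [Matrix.mulVec_mulVec, Matrix.nonsing_inv_mul _ hdet, Matrix.one_mulVec,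
    Matrix.mulVec_single_one] at h
  exact h.symm
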